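/- Let n, m ∈ ℕ with m ≤ n−1, let Φ_{n−m−1} and Ψ_{n−m−1} be the orthogonal and second kind polynomials associated with Verblunsky coefficients a₀,…,a_{n−m−2} (|a_j| < 1), let q_m be a monic polynomial of degree m with all zeros in the open unit disk 𝔻, and let η ∈ 𝕋. Define p_{n−1} by 2 z p_{n−1}(z) = z q_m(z)·(Φ_{n−m−1}(z) + Ψ_{n−m−1}(z)) + η q_m*(z)·(Φ*_{n−m−1}(z) − Ψ*_{n−m−1}(z)). Then p_{n−1} is a monic polynomial of degree n−1 and p*_{n−1} has no zero in the closed unit disk; equivalently, p_{n−1} has all its zeros in 𝔻. -/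

import Mathlib

/-!
Put `A = (Φ_k + Ψ_k) / 2` and `D = (Φ*_k - Ψ*_k) / 2`, so that `z p = z q A + η q* D`. The Szegő
recursions say that `(z A, D)` is transformed by the matrices `[[1, -a_j], [-conj a_j, 1]]`,
followed by a multiplication of the first entry by `z`. These matrices scale the indefinite form
`|x|² - |y|²` by `1 - |a_j|² > 0`, hence `|D| < |z A|` outside `𝔻`. The same form gives `|q*| ≤ |q|`
there, factor by factor, so `z q A` strictly dominates `η q* D` and `p` does not vanish.
-/

open Polynomial

/-- The reversed polynomial `P*(z) = z^n conj(P(1/conj z))` at degree `n`. -/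
noncomputable def pstar (n : ℕ) (P : Polynomial ℂ) : Polynomial ℂ :=
  Polynomial.reflect n (P.map (starRingEnd ℂ))

open scoped ComplexConjugate

section IndefiniteForm

variable {𝕜 : Type*} [RCLike 𝕜]

lemma norm_sub_mul_sq_sub_norm_sub_conj_mul_sq (a x y : 𝕜) :
    ‖x - a * y‖ ^ 2 - ‖y - conj a * x‖ ^ 2 = (1 - ‖a‖ ^ 2) * (‖x‖ ^ 2 - ‖y‖ ^ 2) := by
  apply RCLike.ofReal_injective (K := 𝕜)
  push_cast
  simp only [← RCLike.mul_conj, map_sub, map_mul, RCLike.conj_conj]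
  ring

lemma norm_sub_conj_mul_le_norm_sub_mul {a x y : 𝕜} (ha : ‖a‖ ≤ 1) (hyx : ‖y‖ ≤ ‖x‖) :
    ‖y - conj a * x‖ ≤ ‖x - a * y‖ := by
  have hform : 0 ≤ (1 - ‖a‖ ^ 2) * (‖x‖ ^ 2 - ‖y‖ ^ 2) :=
    mul_nonneg (sub_nonneg.2 (pow_le_one₀ (norm_nonneg a) ha)) (sub_nonneg.2 (by gcongr))
  rw [← norm_sub_mul_sq_sub_norm_sub_conj_mul_sq] at hform
  exact le_of_sq_le_sq (sub_nonneg.1 hform) (norm_nonneg _)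

lemma norm_sub_conj_mul_lt_norm_sub_mul {a x y : 𝕜} (ha : ‖a‖ < 1) (hyx : ‖y‖ < ‖x‖) :
    ‖y - conj a * x‖ < ‖x - a * y‖ := by
  have hform : 0 < (1 - ‖a‖ ^ 2) * (‖x‖ ^ 2 - ‖y‖ ^ 2) :=
    mul_pos (sub_pos.2 (pow_lt_one₀ (norm_nonneg a) ha two_ne_zero)) (sub_pos.2 (by gcongr))
  rw [← norm_sub_mul_sq_sub_norm_sub_conj_mul_sq] at hform
  exact lt_of_pow_lt_pow_left₀ 2 (norm_nonneg _) (sub_pos.1 hform)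

end IndefiniteForm

section Reverse

variable {R : Type*} [CommRing R] [IsDomain R]

lemma reverse_multiset_prod_X_sub_C (s : Multiset R) :
    (s.map fun w => X - C w).prod.reverse = (s.map fun w => 1 - C w * X).prod := by
  induction s using Multiset.induction with
  | empty => simpa using reverse_C (1 : R)
  | cons w s ih =>
    have hfactor : (X - C w : R[X]).reverse = 1 - C w * X := by
      simp [reverse, reflect_sub]
    simp only [Multiset.map_cons, Multiset.prod_cons, reverse_mul_of_domain, hfactor, ih]

lemma reverse_eq_prod_roots_of_splits {f : R[X]} (hf : f.Splits) :
    f.reverse = C f.leadingCoeff * (f.roots.map fun w => 1 - C w * X).prod := by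
  conv_lhs => rw [hf.eq_prod_roots]
  rw [reverse_mul_of_domain, reverse_C, reverse_multiset_prod_X_sub_C]

end Reverse

section Pstar

lemma natDegree_pstar_le {n : ℕ} {P : ℂ[X]} (hP : P.natDegree ≤ n) :
    (pstar n P).natDegree ≤ n :=
  natDegree_reflect_le.trans (max_le le_rfl (natDegree_map_le.trans hP))

lemma pstar_mul {k l : ℕ} {P Q : ℂ[X]} (hP : P.natDegree ≤ k) (hQ : Q.natDegree ≤ l) :
    pstar (k + l) (P * Q) = pstar k P * pstar l Q := by
  rw [pstar, Polynomial.map_mul]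
  exact reflect_mul _ _ (natDegree_map_le.trans hP) (natDegree_map_le.trans hQ)

lemma pstar_sub (n : ℕ) (P Q : ℂ[X]) : pstar n (P - Q) = pstar n P - pstar n Q := by
  simp [pstar]

lemma pstar_pstar (n : ℕ) (P : ℂ[X]) : pstar n (pstar n P) = P := by
  simp [pstar, reflect_map, Polynomial.map_map]

lemma pstar_one_X : pstar 1 X = 1 := by
  simp [pstar]

lemma pstar_one_C (c : ℂ) : pstar 1 (C c) = C (conj c) * X := by
  simp [pstar]

lemma eval_pstar_natDegree (P : ℂ[X]) (z : ℂ) :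
    (pstar P.natDegree P).eval z =
      conj P.leadingCoeff * (P.roots.map fun w => 1 - conj w * z).prod := by
  have hconj : (pstar P.natDegree P).eval z = conj (P.reverse.eval (conj z)) := by
    rw [pstar, reflect_map, ← eval_map_apply, Complex.conj_conj, reverse]
  rw [hconj, reverse_eq_prod_roots_of_splits (IsAlgClosed.splits P)]
  simp [eval_multiset_prod, map_multiset_prod]

lemma norm_eval_pstar_natDegree_le {P : ℂ[X]} (hP : ∀ w ∈ P.roots, ‖w‖ ≤ 1) {z : ℂ}
    (hz : 1 ≤ ‖z‖) : ‖(pstar P.natDegree P).eval z‖ ≤ ‖P.eval z‖ := by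
  have hnorm (f : ℂ → ℂ) : ‖(P.roots.map f).prod‖ = (P.roots.map fun w => ‖f w‖).prod := by
    simpa using map_multiset_prod (normHom (α := ℂ)) (P.roots.map f)
  rw [eval_pstar_natDegree, (IsAlgClosed.splits P).eval_eq_prod_roots, norm_mul, norm_mul,
    RCLike.norm_conj, hnorm, hnorm]
  gcongr
  refine Multiset.prod_map_le_prod_map₀ _ _ (fun _ _ => norm_nonneg _) fun w hw => ?_
  simpa using norm_sub_conj_mul_le_norm_sub_mul (hP w hw) (y := 1) (by simpa using hz)

lemma eval_pstar_natDegree_ne_zero {P : ℂ[X]} (hP0 : P ≠ 0) (hP : ∀ w ∈ P.roots, ‖w‖ < 1)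
    {z : ℂ} (hz : ‖z‖ ≤ 1) : (pstar P.natDegree P).eval z ≠ 0 := by
  rw [eval_pstar_natDegree]
  refine mul_ne_zero (by simpa using hP0) (Multiset.prod_ne_zero fun hmem => ?_)
  obtain ⟨w, hw, hfactor⟩ := Multiset.mem_map.1 hmem
  have hlt : ‖conj w * z‖ < 1 := by
    rw [norm_mul, RCLike.norm_conj]
    exact mul_lt_one_of_nonneg_of_lt_one_left (norm_nonneg w) (hP w hw) hz
  rw [← sub_eq_zero.1 hfactor, norm_one] at hlt
  exact hlt.false

end Pstar

section Szego

/-- The orthogonal polynomials `Φ_j` on the unit circle with Verblunsky coefficients `a`, defined by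
the Szegő recursion. The second kind polynomials `Ψ_j` are `szego (-a) j`. -/
noncomputable def szego (a : ℕ → ℂ) : ℕ → ℂ[X]
  | 0 => 1
  | j + 1 => X * szego a j - C (a j) * pstar j (szego a j)

/-- The polynomial `(Φ_k + Ψ_k) / 2`; multiplied by `z` it is the dominant component of the
recursion outside the unit disk. -/
noncomputable def szegoHalfSum (a : ℕ → ℂ) (k : ℕ) : ℂ[X] :=
  C 2⁻¹ * (szego a k + szego (-a) k)

/-- The polynomial `(Φ*_k - Ψ*_k) / 2`, the companion of `szegoHalfSum` in the recursion. -/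
noncomputable def szegoHalfDiff (a : ℕ → ℂ) (k : ℕ) : ℂ[X] :=
  C 2⁻¹ * (pstar k (szego a k) - pstar k (szego (-a) k))

lemma eq_szego {a : ℕ → ℂ} {k : ℕ} {F : ℕ → ℂ[X]} (hF0 : F 0 = 1)
    (hF : ∀ j < k, F (j + 1) = X * F j - C (a j) * pstar j (F j)) : F k = szego a k := by
  induction k with
  | zero => exact hF0
  | succ k ih => rw [hF k k.lt_succ_self, ih fun j hj => hF j (hj.trans k.lt_succ_self), szego]

variable (a : ℕ → ℂ) (k : ℕ)

lemma isMonicOfDegree_szego : (szego a k).IsMonicOfDegree k := by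
  induction k with
  | zero => exact isMonicOfDegree_zero_iff.2 rfl
  | succ k ih =>
    have hX : (X * szego a k).IsMonicOfDegree (k + 1) :=
      add_comm 1 k ▸ (isMonicOfDegree_X ℂ).mul ih
    have hstar : (pstar k (szego a k)).natDegree ≤ k := natDegree_pstar_le ih.natDegree_eq.le
    exact hX.sub ((natDegree_C_mul_le _ _).trans_lt (Nat.lt_succ_of_le hstar))

lemma pstar_szego_succ :
    pstar (k + 1) (szego a (k + 1)) =
      pstar k (szego a k) - C (conj (a k)) * X * szego a k := by
  have hdeg : (szego a k).natDegree ≤ k := (isMonicOfDegree_szego a k).natDegree_eq.le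
  rw [szego, pstar_sub, add_comm k 1, pstar_mul natDegree_X_le hdeg,
    pstar_mul ((natDegree_C _).le.trans zero_le_one) (natDegree_pstar_le hdeg), pstar_pstar,
    pstar_one_X, pstar_one_C, one_mul]

lemma szegoHalfSum_succ :
    szegoHalfSum a (k + 1) = X * szegoHalfSum a k - C (a k) * szegoHalfDiff a k := by
  simp only [szegoHalfSum, szegoHalfDiff, szego, Pi.neg_apply, C_neg]
  ring

lemma szegoHalfDiff_succ :
    szegoHalfDiff a (k + 1) = szegoHalfDiff a k - C (conj (a k)) * (X * szegoHalfSum a k) := by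
  simp only [szegoHalfSum, szegoHalfDiff, pstar_szego_succ, Pi.neg_apply, map_neg]
  ring

lemma isMonicOfDegree_szegoHalfSum : (szegoHalfSum a k).IsMonicOfDegree k := by
  have hΦ := (isMonicOfDegree_iff _ _).1 (isMonicOfDegree_szego a k)
  have hΨ := (isMonicOfDegree_iff _ _).1 (isMonicOfDegree_szego (-a) k)
  refine (isMonicOfDegree_iff _ _).2 ⟨?_, ?_⟩
  · exact (natDegree_C_mul_le _ _).trans (natDegree_add_le_of_degree_le hΦ.1 hΨ.1)
  · rw [szegoHalfSum, coeff_C_mul, coeff_add, hΦ.2, hΨ.2]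
    norm_num

lemma natDegree_szegoHalfDiff_le : (szegoHalfDiff a k).natDegree ≤ k :=
  (natDegree_C_mul_le _ _).trans <| (natDegree_sub_le _ _).trans <| max_le
    (natDegree_pstar_le (isMonicOfDegree_szego a k).natDegree_eq.le)
    (natDegree_pstar_le (isMonicOfDegree_szego (-a) k).natDegree_eq.le)

variable {a k}

lemma norm_eval_szegoHalfDiff_lt (ha : ∀ j < k, ‖a j‖ < 1) {z : ℂ} (hz : 1 ≤ ‖z‖) :
    ‖(szegoHalfDiff a k).eval z‖ < ‖z * (szegoHalfSum a k).eval z‖ := by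
  induction k with
  | zero =>
    have hz0 : 0 < ‖z‖ := one_pos.trans_le hz
    simpa [szegoHalfDiff, szegoHalfSum, szego, ← two_mul] using hz0
  | succ k ih =>
    have hdom := ih fun j hj => ha j (hj.trans k.lt_succ_self)
    set x := z * (szegoHalfSum a k).eval z
    set y := (szegoHalfDiff a k).eval z
    calc ‖(szegoHalfDiff a (k + 1)).eval z‖
        = ‖y - conj (a k) * x‖ := by
          rw [szegoHalfDiff_succ, eval_sub, eval_C_mul, eval_mul, eval_X]
      _ < ‖x - a k * y‖ := norm_sub_conj_mul_lt_norm_sub_mul (ha k k.lt_succ_self) hdom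
      _ = ‖(szegoHalfSum a (k + 1)).eval z‖ := by
          rw [szegoHalfSum_succ, eval_sub, eval_C_mul, eval_mul, eval_X]
      _ ≤ ‖z * (szegoHalfSum a (k + 1)).eval z‖ := by
          rw [norm_mul]
          exact le_mul_of_one_le_left (norm_nonneg _) hz

end Szego

lemma isMonicOfDegree_of_X_mul_eq {R : Type*} [Semiring R] {n : ℕ} {p A E : R[X]}
    (hA : A.IsMonicOfDegree n) (hE : E.natDegree ≤ n) (hp : X * p = X * A + E) :
    p.IsMonicOfDegree n := by
  rcases subsingleton_or_nontrivial R with _ | _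
  · simpa using hA
  have hXp : (X * p).IsMonicOfDegree (1 + n) :=
    hp ▸ ((isMonicOfDegree_X R).mul hA).add_right (by omega)
  exact (isMonicOfDegree_X R).of_mul_left hXp

lemma norm_lt_one_of_eval_eq_zero_of_X_mul_eq {p q A D : ℂ[X]} {η : ℂ} (hη : ‖η‖ ≤ 1)
    (hq : ∀ z : ℂ, q.eval z = 0 → ‖z‖ < 1)
    (hAD : ∀ z : ℂ, 1 ≤ ‖z‖ → ‖D.eval z‖ < ‖z * A.eval z‖)
    (hp : X * p = X * (q * A) + C η * pstar q.natDegree q * D) {z : ℂ} (hz : p.eval z = 0) :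
    ‖z‖ < 1 := by
  by_contra! hz1
  have hqz : 0 < ‖q.eval z‖ := norm_pos_iff.2 fun h => (hq z h).not_ge hz1
  have hqstar : ‖(pstar q.natDegree q).eval z‖ ≤ ‖q.eval z‖ :=
    norm_eval_pstar_natDegree_le (fun w hw => (hq w (isRoot_of_mem_roots hw)).le) hz1
  have hbalance : q.eval z * (z * A.eval z) =
      -(η * (pstar q.natDegree q).eval z * D.eval z) := by
    have h := congrArg (eval z) hp
    simp only [eval_add, eval_mul, eval_X, eval_C, hz] at h
    linear_combination -h
  have hdom : ‖q.eval z * (z * A.eval z)‖ < ‖q.eval z * (z * A.eval z)‖ := by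
    calc ‖q.eval z * (z * A.eval z)‖
        = ‖η‖ * ‖(pstar q.natDegree q).eval z‖ * ‖D.eval z‖ := by
          rw [hbalance, norm_neg, norm_mul, norm_mul]
      _ ≤ 1 * ‖q.eval z‖ * ‖D.eval z‖ := by gcongr
      _ < ‖q.eval z‖ * ‖z * A.eval z‖ := by
          rw [one_mul]
          exact mul_lt_mul_of_pos_left (hAD z hz1) hqz
      _ = ‖q.eval z * (z * A.eval z)‖ := (norm_mul _ _).symm
  exact hdom.false

theorem stmt9_general {k : ℕ} {a : ℕ → ℂ} (ha : ∀ j < k, ‖a j‖ < 1)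
    {q : ℂ[X]} (hq : q.Monic) (hqzeros : ∀ z : ℂ, q.eval z = 0 → ‖z‖ < 1)
    {η : ℂ} (hη : ‖η‖ ≤ 1) {p : ℂ[X]}
    (hp : 2 * (X * p) =
      X * q * (szego a k + szego (-a) k) +
        C η * pstar q.natDegree q * (pstar k (szego a k) - pstar k (szego (-a) k))) :
    p.Monic ∧ p.natDegree = q.natDegree + k ∧
      (∀ z : ℂ, ‖z‖ ≤ 1 → (pstar (q.natDegree + k) p).eval z ≠ 0) ∧
      (∀ z : ℂ, p.eval z = 0 → ‖z‖ < 1) := by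
  have hXp : X * p = X * (q * szegoHalfSum a k) +
      C η * pstar q.natDegree q * szegoHalfDiff a k := by
    have htwo : (C 2⁻¹ * 2 : ℂ[X]) = 1 := by
      rw [← C_ofNat, ← C_mul, inv_mul_cancel₀ two_ne_zero, C_1]
    rw [szegoHalfSum, szegoHalfDiff]
    linear_combination C 2⁻¹ * hp - X * p * htwo
  have hdeg : p.IsMonicOfDegree (q.natDegree + k) :=
    isMonicOfDegree_of_X_mul_eq (IsMonicOfDegree.mul ⟨rfl, hq⟩ (isMonicOfDegree_szegoHalfSum a k))
      (natDegree_mul_le_of_le ((natDegree_C_mul_le _ _).trans (natDegree_pstar_le le_rfl))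
        (natDegree_szegoHalfDiff_le a k)) hXp
  have hzeros : ∀ z : ℂ, p.eval z = 0 → ‖z‖ < 1 := fun _ =>
    norm_lt_one_of_eval_eq_zero_of_X_mul_eq hη hqzeros
      (fun _ => norm_eval_szegoHalfDiff_lt ha) hXp
  refine ⟨hdeg.monic, hdeg.natDegree_eq, fun z hz => ?_, hzeros⟩
  rw [← hdeg.natDegree_eq]
  exact eval_pstar_natDegree_ne_zero hdeg.ne_zero
    (fun w hw => hzeros w (isRoot_of_mem_roots hw)) hz

theorem stmt9
    (n m : ℕ) (hn : 1 ≤ n) (hm : 1 ≤ m) (hmn : m ≤ n - 1)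
    (a : ℕ → ℂ) (ha : ∀ j < n - m - 1, ‖a j‖ < 1)
    (Φ : ℕ → Polynomial ℂ) (hΦ0 : Φ 0 = 1)
    (hΦrec : ∀ j < n - m - 1, Φ (j + 1) = X * Φ j - C (a j) * pstar j (Φ j))
    (Ψ : ℕ → Polynomial ℂ) (hΨ0 : Ψ 0 = 1)
    (hΨrec : ∀ j < n - m - 1, Ψ (j + 1) = X * Ψ j + C (a j) * pstar j (Ψ j))
    (q : Polynomial ℂ) (hqmonic : q.Monic) (hqdeg : q.natDegree = m)
    (hqzeros : ∀ z : ℂ, q.eval z = 0 → ‖z‖ < 1)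
    (η : ℂ) (hη : ‖η‖ = 1)
    (p : Polynomial ℂ)
    (hp : 2 * (X * p) =
      X * q * (Φ (n - m - 1) + Ψ (n - m - 1)) +
        C η * pstar m q *
          (pstar (n - m - 1) (Φ (n - m - 1)) - pstar (n - m - 1) (Ψ (n - m - 1)))) :
    p.Monic ∧ p.natDegree = n - 1 ∧
      (∀ z : ℂ, ‖z‖ ≤ 1 → (pstar (n - 1) p).eval z ≠ 0) ∧
      (∀ z : ℂ, p.eval z = 0 → ‖z‖ < 1) := by
  subst hqdeg
  rw [eq_szego hΦ0 hΦrec, eq_szego (a := -a) hΨ0 (by simpa using hΨrec)] at hp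
  rw [show n - 1 = q.natDegree + (n - q.natDegree - 1) by omega]
  exact stmt9_general ha hqmonic hqzeros hη.le hp
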